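/- Let K be a field and let R = AddMonoidAlgebra K ℚ≥0, with its canonical ℚ-grading in which the component of degree q ∈ ℚ is the K-span of e_q = single q 1 if q ≥ 0 and is zero otherwise, and let 𝔪 be the ideal of R generated by { e_α | α > 0 }, a homogeneous ideal whose degree-q component is 𝔪 ∩ R_q. Then there exist a ℚ-graded R-module N (an R-module N with a grading 𝒩 : ℚ → AddSubgroup N making it a ℚ-graded R-module) and an R-linear map f : 𝔪 →ₗ[R] N such that for NO finite subset S ⊆ ℚ does one have f(𝔪 ∩ R_q) ⊆ ∑_{s ∈ S} 𝒩 (q + s) for all q ∈ ℚ; that is, the canonical monomorphism HOM_ℚ(𝔪, N)_[0] → Hom_R(𝔪, N) is not surjective. -/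

import Mathlib

open scoped NNRat

/-- The canonical `ℚ`-grading of `R = K[ℚ≥0]`: the component of degree `q` is the
`K`-span of `e_q = single q 1` if `q ≥ 0`, and zero otherwise. -/
noncomputable def canonicalGrade (K : Type) [Field K] (q : ℚ) :
    AddSubgroup (AddMonoidAlgebra K ℚ≥0) :=
  if h : 0 ≤ q then
    (Submodule.span K {AddMonoidAlgebra.single (⟨q, h⟩ : ℚ≥0) (1 : K)}).toAddSubgroup
  else ⊥

/-- Addition of `α` in the second coordinate, on the basis of `⨁ n, K[ℚ≥0]` indexed by pairs
`(n, β)`, with the vectors crossing the barrier `n * β = 1` sent to zero. -/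
noncomputable def barrierShift (K : Type) [Field K] (α : ℚ≥0) (p : ℕ × ℚ≥0) : ℕ × ℚ≥0 →₀ K :=
  if p.1 * p.2 < 1 ∧ 1 ≤ p.1 * (α + p.2) then 0 else .single (p.1, α + p.2) 1

/-- The monoid `ℚ≥0` acts on `⨁ n, K[ℚ≥0]` by barrier shifts. -/
noncomputable def barrierShiftHom (K : Type) [Field K] :
    Multiplicative ℚ≥0 →* Module.End K (ℕ × ℚ≥0 →₀ K) where
  toFun α := Finsupp.linearCombination K (barrierShift K α.toAdd)
  map_one' := by
    ext p : 2
    have h : ¬ (p.1 * p.2 < 1 ∧ 1 ≤ p.1 * p.2) := fun h => absurd h.1 h.2.not_gt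
    simp [barrierShift, h]
  map_mul' α γ := by
    ext p : 2
    obtain ⟨n, β⟩ := p
    have h₁ : (n : ℚ≥0) * β ≤ n * (γ.toAdd + β) :=
      mul_le_mul_of_nonneg_left (le_add_of_nonneg_left (zero_le (a := γ.toAdd))) zero_le
    have h₂ : (n : ℚ≥0) * (γ.toAdd + β) ≤ n * (α.toAdd + (γ.toAdd + β)) :=
      mul_le_mul_of_nonneg_left (le_add_of_nonneg_left (zero_le (a := α.toAdd))) zero_le
    simp only [LinearMap.comp_apply, Finsupp.lsingle_apply, Finsupp.linearCombination_single,
      one_smul, Module.End.mul_apply, barrierShift, toAdd_mul, add_assoc]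
    by_cases h₃ : (n : ℚ≥0) * β < 1 <;> by_cases h₄ : (n : ℚ≥0) * (γ.toAdd + β) < 1
    · simp [barrierShift, h₃, h₄, h₄.not_ge]
    · simp [h₃, not_lt.1 h₄, (not_lt.1 h₄).trans h₂]
    · exact absurd (h₁.trans_lt h₄) h₃
    · simp [barrierShift, h₃, h₄]

/-- The `K`-linear map on `K[ℚ≥0]` sending `e_α` to the sum of the `(n, α)` with `n * α < 1`,
when `α ≠ 0`. -/
noncomputable def truncatedDiagonal (K : Type) [Field K] :
    AddMonoidAlgebra K ℚ≥0 →ₗ[K] ℕ × ℚ≥0 →₀ K :=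
  Finsupp.linearCombination K
      (fun α => ∑ n ∈ Finset.range ⌈α⁻¹⌉₊, Finsupp.single (n, α) (1 : K)) ∘ₗ
    (AddMonoidAlgebra.coeffLinearEquiv K).toLinearMap

theorem truncatedDiagonal_single (K : Type) [Field K] (α : ℚ≥0) (c : K) :
    truncatedDiagonal K (.single α c) =
      c • ∑ n ∈ Finset.range ⌈α⁻¹⌉₊, Finsupp.single (n, α) (1 : K) := by
  simp [truncatedDiagonal]

theorem mem_range_ceil_inv {α : ℚ≥0} (hα : 0 < α) (n : ℕ) :
    n ∈ Finset.range ⌈α⁻¹⌉₊ ↔ n * α < 1 := by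
  rw [Finset.mem_range, Nat.lt_ceil, ← one_div, lt_div_iff₀ hα]

theorem linearCombination_barrierShift_truncatedDiagonal (K : Type) [Field K]
    (α : ℚ≥0) {β : ℚ≥0} (hβ : 0 < β) :
    Finsupp.linearCombination K (barrierShift K α) (truncatedDiagonal K (.single β 1)) =
      truncatedDiagonal K (.single (α + β) 1) := by
  have hs : Finset.range ⌈(α + β)⁻¹⌉₊ =
      {n ∈ Finset.range ⌈β⁻¹⌉₊ | ((n : ℕ) : ℚ≥0) * (α + β) < 1} := by
    ext n
    rw [Finset.mem_filter, mem_range_ceil_inv hβ,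
      mem_range_ceil_inv (add_pos_of_nonneg_of_pos zero_le hβ)]
    refine ⟨fun h => ⟨lt_of_le_of_lt ?_ h, h⟩, fun h => h.2⟩
    gcongr
    exact le_add_of_nonneg_left zero_le
  simp only [truncatedDiagonal_single, one_smul, map_sum, Finsupp.linearCombination_single]
  rw [hs, Finset.sum_filter]
  refine Finset.sum_congr rfl fun n hn => ?_
  rw [mem_range_ceil_inv hβ] at hn
  by_cases h : (n : ℚ≥0) * (α + β) < 1
  · simp [barrierShift, h, h.not_ge]
  · simp [barrierShift, h, hn, not_lt.1 h]

theorem truncatedDiagonal_mul (K : Type) [Field K] {x : AddMonoidAlgebra K ℚ≥0}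
    (hx : x ∈ Ideal.span
      {x : AddMonoidAlgebra K ℚ≥0 | ∃ α : ℚ≥0, 0 < α ∧ x = AddMonoidAlgebra.single α 1})
    (r : AddMonoidAlgebra K ℚ≥0) :
    truncatedDiagonal K (r * x) =
      AddMonoidAlgebra.lift K _ _ (barrierShiftHom K) r (truncatedDiagonal K x) := by
  induction hx using Submodule.span_induction generalizing r with
  | zero => simp
  | add x y _ _ hx hy => simp [mul_add, hx, hy]
  | smul a x _ hx => rw [smul_eq_mul, ← mul_assoc, hx, hx, map_mul, Module.End.mul_apply]
  | mem x hx =>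
    obtain ⟨β, hβ, rfl⟩ := hx
    induction r using AddMonoidAlgebra.induction_linear with
    | zero => simp
    | add r s hr hs => simp [add_mul, hr, hs]
    | single α c =>
      have h : AddMonoidAlgebra.single α c * AddMonoidAlgebra.single β (1 : K) =
          c • AddMonoidAlgebra.single (α + β) (1 : K) := by
        simp [AddMonoidAlgebra.single_mul_single]
      rw [h, map_smul, AddMonoidAlgebra.lift_single, LinearMap.smul_apply,
        ← linearCombination_barrierShift_truncatedDiagonal K α hβ]
      rfl

/-- Finitely supported functions decompose as the direct sum, over the values of a degree map,
of the functions supported on its fibres. -/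
theorem isInternal_supported_fiber {K ι P : Type*} [DecidableEq ι] [Field K] (d : P → ι) :
    DirectSum.IsInternal fun i => Finsupp.supported K K (d ⁻¹' {i}) := by
  refine DirectSum.isInternal_submodule_of_iSupIndep_of_iSup_eq_top (fun i => ?_) ?_
  · have hle : ⨆ j, ⨆ _ : j ≠ i, Finsupp.supported K K (d ⁻¹' {j}) ≤
        Finsupp.supported K K (d ⁻¹' {i})ᶜ :=
      iSup₂_le fun j hj => Finsupp.supported_mono fun p hp hp' => hj (hp.symm.trans hp')
    exact (Finsupp.disjoint_supported_supported disjoint_compl_right).mono_right hle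
  · rw [← Finsupp.supported_iUnion, ← Set.preimage_iUnion, Set.iUnion_of_singleton,
      Set.preimage_univ, Finsupp.supported_univ]

theorem canonicalGrade_coe (K : Type) [Field K] (α : ℚ≥0) :
    canonicalGrade K α =
      (Submodule.span K {AddMonoidAlgebra.single α (1 : K)}).toAddSubgroup :=
  dif_pos α.2

theorem canonicalGrade_of_neg (K : Type) [Field K] {q : ℚ} (hq : q < 0) :
    canonicalGrade K q = ⊥ :=
  dif_neg hq.not_ge

theorem barrierShift_mem_supported (K : Type) [Field K] (α : ℚ≥0) (p : ℕ × ℚ≥0) :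
    barrierShift K α p ∈
      Finsupp.supported K K ((fun p : ℕ × ℚ≥0 => (p.1 + p.2 : ℚ)) ⁻¹' {α + (p.1 + p.2 : ℚ)}) := by
  rw [barrierShift]
  split_ifs
  · exact zero_mem _
  · refine Finsupp.single_mem_supported K _ ?_
    simp only [Set.mem_preimage, Set.mem_singleton_iff]
    push_cast
    ring

/-- For `R = K[ℚ≥0]` with its canonical `ℚ`-grading and `𝔪` the homogeneous ideal
generated by the `e_α` with `α > 0`, there are a `ℚ`-graded `R`-module `N` and an
`R`-linear map `f : 𝔪 → N` admitting no finite set `S ⊆ ℚ` with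
`f(𝔪 ∩ R_q) ⊆ ∑_{s ∈ S} 𝒩 (q + s)` for all `q`; i.e. the canonical monomorphism
`HOM_ℚ(𝔪, N)_[0] → Hom_R(𝔪, N)` is not surjective. -/
theorem graded_hom_to_hom_not_surjective (K : Type) [Field K]
    (𝔪 : Ideal (AddMonoidAlgebra K ℚ≥0))
    (h𝔪 : 𝔪 = Ideal.span
      {x : AddMonoidAlgebra K ℚ≥0 | ∃ α : ℚ≥0, 0 < α ∧ x = AddMonoidAlgebra.single α 1}) :
    ∃ (N : Type) (_ : AddCommGroup N) (_ : Module (AddMonoidAlgebra K ℚ≥0) N)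
      (𝒩 : ℚ → AddSubgroup N),
      DirectSum.IsInternal 𝒩 ∧
      (∀ q q' : ℚ, ∀ r ∈ canonicalGrade K q, ∀ n ∈ 𝒩 q', r • n ∈ 𝒩 (q + q')) ∧
      ∃ f : 𝔪 →ₗ[AddMonoidAlgebra K ℚ≥0] N,
        ∀ S : Finset ℚ, ¬ (∀ q : ℚ, ∀ x : 𝔪, (x : AddMonoidAlgebra K ℚ≥0) ∈ canonicalGrade K q →
          f x ∈ ⨆ s ∈ S, 𝒩 (q + s)) := by
  classical
  subst h𝔪
  let N := ℕ × ℚ≥0 →₀ K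
  let φ := AddMonoidAlgebra.lift K (Module.End K N) _ (barrierShiftHom K)
  let d : ℕ × ℚ≥0 → ℚ := fun p => p.1 + p.2
  let _ : Module (AddMonoidAlgebra K ℚ≥0) N := Module.compHom N φ.toRingHom
  refine ⟨N, inferInstance, inferInstance,
    fun q => (Finsupp.supported K K (d ⁻¹' {q})).toAddSubgroup,
    isInternal_supported_fiber d, ?_, ?_⟩
  · intro q q' r hr n hn
    rcases le_or_gt 0 q with hq | hq
    · lift q to ℚ≥0 using hq
      rw [canonicalGrade_coe] at hr
      obtain ⟨c, rfl⟩ := Submodule.mem_span_singleton.1 hr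
      change φ _ n ∈ Finsupp.supported K K _
      rw [map_smul, LinearMap.smul_apply, AddMonoidAlgebra.lift_single, one_smul]
      refine Submodule.smul_mem _ c (Submodule.sum_mem _ fun p hp => Submodule.smul_mem _ _ ?_)
      have hpq : (p.1 + p.2 : ℚ) = q' := hn hp
      rw [← hpq]
      exact barrierShift_mem_supported K q p
    · rw [canonicalGrade_of_neg K hq] at hr
      rw [AddSubgroup.mem_bot.1 hr, zero_smul]
      exact zero_mem _
  · refine ⟨{ toFun := fun x => truncatedDiagonal K x
              map_add' := fun x y => map_add _ _ _
              map_smul' := fun r x => truncatedDiagonal_mul K x.2 r }, fun S hS => ?_⟩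
    obtain ⟨n, hn⟩ := Infinite.exists_notMem_finset
      (S.preimage (Nat.cast : ℕ → ℚ) Nat.cast_injective.injOn)
    have hnS : (n : ℚ) ∉ S := fun h => hn (Finset.mem_preimage.2 h)
    let β : ℚ≥0 := ((n : ℚ≥0) + 1)⁻¹
    have hβ : 0 < β := by positivity
    have key := hS β ⟨.single β 1, Ideal.subset_span ⟨β, hβ, rfl⟩⟩ (by
      rw [canonicalGrade_coe]
      exact Submodule.mem_span_singleton_self _)
    have hle : ⨆ s ∈ S, (Finsupp.supported K K (d ⁻¹' {(β : ℚ) + s})).toAddSubgroup ≤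
        (LinearMap.ker (Finsupp.lapply (R := K) (M := K) (n, β))).toAddSubgroup := by
      refine iSup₂_le fun s hs g hg => ?_
      refine Finsupp.notMem_support_iff.1 fun hmem => hnS ?_
      have h : (n + β : ℚ) = β + s := hg hmem
      have h' : (n : ℚ) = s := by linarith
      rwa [h']
    have hzero : truncatedDiagonal K (.single β 1) (n, β) = 0 := hle key
    have hmem : n ∈ Finset.range ⌈β⁻¹⌉₊ := by
      rw [mem_range_ceil_inv hβ, ← div_eq_mul_inv, div_lt_one (by positivity)]
      exact lt_add_one _
    simp [truncatedDiagonal_single, Finsupp.finsetSum_apply, Finsupp.single_apply,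
      -Finset.mem_range, hmem] at hzero
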